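/- arXiv:0902.0433 — 2 statements merged into one kernel-verified Lean document; each statement's English description precedes it below -/
import Mathlib

section
/- Let v ∈ Ω and m ∈ ℤ with v(m−1) ≠ v(m), and suppose that the sequence obtained from v by exchanging its values at sites m−1 and m belongs to Ω. Then for every n ≥ 1, in the unique (n−1, n)-partition (cᵢ)_{i∈ℤ} of v, m is a cut point (m = cᵢ for some i), the block beginning at site m+1 is sₙ, and either (a) the block ending at m is sₙ and is immediately preceded by an s_{n−1}-block, or (b) the block ending at m is s_{n−1} and is immediately preceded by an sₙ-block; moreover, if form (a) holds at level n then form (b) holds at level n+1, and if form (b) holds at level n then form (a) holds at level n+1. -/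
open scoped Classical

noncomputable section

/-- The Gauss map. -/
def gaussMap (x : ℝ) : ℝ := Int.fract x⁻¹

/-- `pq α k` is the partial quotient `a_{k+1}` of the continued fraction of `α`. -/
def pq (α : ℝ) (k : ℕ) : ℕ := ⌊(gaussMap^[k] α)⁻¹⌋₊

/-- `qd α (n+1)` is the convergent denominator `q_n`; `qd α 0 = q_{-1} = 0`, `qd α 1 = q₀ = 1`. -/
def qd (α : ℝ) : ℕ → ℕ
  | 0 => 0
  | 1 => 1
  | (n+2) => pq α n * qd α (n+1) + qd α n

/-- The circle map sequence of rotation number `α` (value `true` means letter `1`). -/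
def v0 (α : ℝ) (n : ℤ) : Bool := decide (1 - α ≤ Int.fract ((n : ℝ) * α))

/-- The word `(v₀(m+1), …, v₀(m+n))`. -/
def word (α : ℝ) (m n : ℕ) : List Bool :=
  (List.range n).map (fun i => v0 α ((m : ℤ) + 1 + i))

/-- `w` is a factor (admissible word) of `v₀`. -/
def IsFactor (α : ℝ) (w : List Bool) : Prop := ∃ m : ℕ, w = word α m w.length

/-- `w` occurs as a subword of the prefix `(v₀(1), …, v₀(N))`. -/
def OccursIn (α : ℝ) (w : List Bool) (N : ℕ) : Prop :=
  ∃ m : ℕ, m + w.length ≤ N ∧ w = word α m w.length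

/-- `exhaust α n` is `f(n)`: the least `N` such that every factor of length `n`
occurs in `(v₀(1), …, v₀(N))`. -/
def exhaust (α : ℝ) (n : ℕ) : ℕ :=
  sInf {N | ∀ w : List Bool, w.length = n → IsFactor α w → OccursIn α w N}

/-- number of occurrences of `w` in the prefix `(v₀(1), …, v₀(N))`. -/
def occCount (α : ℝ) (w : List Bool) (N : ℕ) : ℕ :=
  ((Finset.range N).filter (fun m => m + w.length ≤ N ∧ word α m w.length = w)).card

/-- the word `(v(m), v(m+1), …, v(m+n-1))` of a two-sided sequence. -/
def wordAt (v : ℤ → Bool) (m : ℤ) (n : ℕ) : List Bool :=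
  (List.range n).map (fun i => v (m + i))

/-- the hull `Ω`: closure of the set of translates of `v₀`. -/
def hull (α : ℝ) : Set (ℤ → Bool) :=
  closure {u | ∃ m : ℤ, u = fun n => v0 α (n - m)}


/-- `sw α (n+1)` is the word `sₙ`: `sw α 0 = s₋₁ = 1`, `sw α 1 = s₀ = 0`,
`sw α 2 = s₁ = s₀^{a₁-1} s₋₁`, and `s_{n+1} = sₙ^{a_{n+1}} s_{n-1}`. -/
def sw (α : ℝ) : ℕ → List Bool
  | 0 => [true]
  | 1 => [false]
  | 2 => (List.replicate (pq α 0 - 1) [false]).flatten ++ [true]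
  | (n+3) => (List.replicate (pq α (n+1)) (sw α (n+2))).flatten ++ sw α (n+1)

/-- The block of the partition `c` starting at index `i` is the word `s_{lev - 1}`
(of length `q_{lev-1} = qd α lev`), occupying sites `c i + 1, …, c (i+1)` of `v`. -/
def BlockIs (α : ℝ) (v : ℤ → Bool) (c : ℤ → ℤ) (i : ℤ) (lev : ℕ) : Prop :=
  c (i + 1) - c i = (qd α lev : ℤ) ∧ wordAt v (c i + 1) (qd α lev) = sw α lev

/-- `c` is an `(n-1, n)`-partition of `v`: a strictly increasing two-sided sequence of
cut points, with `c 0 ≤ 0 < c 1`, tending to `±∞`, each of whose blocks is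
`s_{n-1}` or `sₙ`. -/
def IsPartition (α : ℝ) (v : ℤ → Bool) (n : ℕ) (c : ℤ → ℤ) : Prop :=
  StrictMono c ∧ c 0 ≤ 0 ∧ 0 < c 1 ∧
  Filter.Tendsto c Filter.atTop Filter.atTop ∧
  Filter.Tendsto c Filter.atBot Filter.atBot ∧
  ∀ i : ℤ, BlockIs α v c i n ∨ BlockIs α v c i (n + 1)

/-- Form (a) at level `n` around the site `m`: `m` is a cut point, the block beginning at
`m + 1` is `sₙ`, the block ending at `m` is `sₙ`, and it is immediately preceded by an
`s_{n-1}`-block. -/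
def FormA (α : ℝ) (v : ℤ → Bool) (m : ℤ) (n : ℕ) (c : ℤ → ℤ) : Prop :=
  ∃ i : ℤ, c i = m ∧ BlockIs α v c i (n + 1) ∧
    BlockIs α v c (i - 1) (n + 1) ∧ BlockIs α v c (i - 2) n

/-- Form (b) at level `n` around the site `m`: `m` is a cut point, the block beginning at
`m + 1` is `sₙ`, the block ending at `m` is `s_{n-1}`, and it is immediately preceded by
an `sₙ`-block. -/
def FormB (α : ℝ) (v : ℤ → Bool) (m : ℤ) (n : ℕ) (c : ℤ → ℤ) : Prop :=
  ∃ i : ℤ, c i = m ∧ BlockIs α v c i (n + 1) ∧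
    BlockIs α v c (i - 1) n ∧ BlockIs α v c (i - 2) (n + 1)

/-! ### Arithmetic of the convergents -/

lemma gaussMap_iterate_mem (α : ℝ) (hirr : Irrational α) (h0 : 0 < α) (h1 : α < 1) (k : ℕ) :
    Irrational (gaussMap^[k] α) ∧ 0 < gaussMap^[k] α ∧ gaussMap^[k] α < 1 := by
  induction k with
  | zero => exact ⟨hirr, h0, h1⟩
  | succ k ih =>
    rw [Function.iterate_succ_apply']
    have h : Irrational (gaussMap (gaussMap^[k] α)) := by
      unfold gaussMap Int.fract
      exact ih.1.inv.sub_intCast _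
    exact ⟨h, lt_of_le_of_ne (Int.fract_nonneg _) h.ne_zero.symm, Int.fract_lt_one _⟩

lemma one_le_pq (α : ℝ) (hirr : Irrational α) (h0 : 0 < α) (h1 : α < 1) (k : ℕ) :
    1 ≤ pq α k := by
  obtain ⟨-, hp, hl⟩ := gaussMap_iterate_mem α hirr h0 h1 k
  exact Nat.le_floor (by simpa using (one_le_inv₀ hp).2 hl.le)

lemma one_le_qd (α : ℝ) (hq : ∀ k, 1 ≤ pq α k) (k : ℕ) : 1 ≤ qd α (k + 1) := by
  induction k with
  | zero => simp [qd]
  | succ k ih =>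
    have h : qd α (k + 1 + 1) = pq α k * qd α (k + 1) + qd α k := rfl
    nlinarith [hq k]

lemma qd_le_succ (α : ℝ) (hq : ∀ k, 1 ≤ pq α k) (k : ℕ) : qd α k ≤ qd α (k + 1) := by
  cases k with
  | zero => simp [qd]
  | succ k =>
    have h : qd α (k + 1 + 1) = pq α k * qd α (k + 1) + qd α k := rfl
    nlinarith [hq k]

/-- Convergent numerators, indexed like `qd`. -/
def pd (α : ℝ) : ℕ → ℤ
  | 0 => 1
  | 1 => 0
  | (n+2) => pq α n * pd α (n+1) + pd α n

/-- The approximation error `|q α - p|` of a convergent, indexed like `qd`. -/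
def cerr (α : ℝ) : ℕ → ℝ
  | 0 => 1
  | (n+1) => gaussMap^[n] α * cerr α n

lemma cerr_pos (α : ℝ) (hirr : Irrational α) (h0 : 0 < α) (h1 : α < 1) (k : ℕ) :
    0 < cerr α k := by
  induction k with
  | zero => simp [cerr]
  | succ k ih => exact mul_pos (gaussMap_iterate_mem α hirr h0 h1 k).2.1 ih

lemma cerr_succ_lt (α : ℝ) (hirr : Irrational α) (h0 : 0 < α) (h1 : α < 1) (k : ℕ) :
    cerr α (k + 1) < cerr α k := by
  have h2 := cerr_pos α hirr h0 h1 k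
  have h3 := (gaussMap_iterate_mem α hirr h0 h1 k).2.2
  change gaussMap^[k] α * cerr α k < cerr α k
  nlinarith

lemma cerr_add_two (α : ℝ) (hirr : Irrational α) (h0 : 0 < α) (h1 : α < 1) (k : ℕ) :
    cerr α (k + 2) = cerr α k - pq α k * cerr α (k + 1) := by
  obtain ⟨-, hp, -⟩ := gaussMap_iterate_mem α hirr h0 h1 k
  have hfl : (pq α k : ℝ) = ⌊(gaussMap^[k] α)⁻¹⌋ := by
    unfold pq
    exact natCast_floor_eq_intCast_floor (inv_pos.2 hp).le
  change gaussMap^[k + 1] α * (gaussMap^[k] α * cerr α k)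
    = cerr α k - pq α k * (gaussMap^[k] α * cerr α k)
  rw [Function.iterate_succ_apply', hfl]
  generalize gaussMap^[k] α = x at hp
  unfold gaussMap Int.fract
  rw [← mul_assoc, sub_mul, inv_mul_cancel₀ hp.ne']
  ring

lemma qd_mul_sub_pd (α : ℝ) (hirr : Irrational α) (h0 : 0 < α) (h1 : α < 1) (k : ℕ) :
    (qd α k : ℝ) * α - pd α k = -(-1) ^ k * cerr α k := by
  induction k using Nat.twoStepInduction with
  | zero => simp [qd, pd, cerr]
  | one => simp [qd, pd, cerr]
  | more k ih1 ih2 =>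
    rw [cerr_add_two α hirr h0 h1 k]
    simp only [qd, pd]
    push_cast
    rw [pow_succ] at ih2
    rw [pow_add]
    linear_combination (pq α k : ℝ) * ih2 + ih1

lemma qd_pd_det (α : ℝ) (k : ℕ) :
    (qd α (k + 1) : ℤ) * pd α k - qd α k * pd α (k + 1) = (-1) ^ k := by
  induction k with
  | zero => simp [qd, pd]
  | succ k ih =>
    simp only [qd, pd]
    push_cast
    rw [pow_succ]
    linear_combination -ih

lemma cerr_le_abs_sub (α : ℝ) (hirr : Irrational α) (h0 : 0 < α) (h1 : α < 1) (l : ℕ)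
    (k p : ℤ) (hk : 1 ≤ k) (hkq : k < qd α (l + 1)) : cerr α l ≤ |(k : ℝ) * α - p| := by
  have hdet := qd_pd_det α l
  have hs : ((-1 : ℤ) ^ l) * (-1) ^ l = 1 := by rw [← mul_pow]; simp
  obtain ⟨x, hx⟩ : ∃ x : ℤ, x = (-1) ^ l * (p * qd α (l + 1) - k * pd α (l + 1)) := ⟨_, rfl⟩
  obtain ⟨y, hy⟩ : ∃ y : ℤ, y = (-1) ^ l * (k * pd α l - p * qd α l) := ⟨_, rfl⟩
  have hk' : k = x * qd α l + y * qd α (l + 1) := by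
    rw [hx, hy]
    linear_combination (-k * (-1) ^ l) * hdet - k * hs
  have hp' : p = x * pd α l + y * pd α (l + 1) := by
    rw [hx, hy]
    linear_combination (-p * (-1) ^ l) * hdet - p * hs
  have e1 := qd_mul_sub_pd α hirr h0 h1 l
  have e2 := qd_mul_sub_pd α hirr h0 h1 (l + 1)
  have hform : (k : ℝ) * α - p = -(-1) ^ l * (x * cerr α l - y * cerr α (l + 1)) := by
    rw [hk', hp']
    push_cast
    rw [pow_succ] at e2
    linear_combination (x : ℝ) * e1 + (y : ℝ) * e2
  have habs : |(k : ℝ) * α - p| = |x * cerr α l - y * cerr α (l + 1)| := by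
    rw [hform, abs_mul, abs_neg, abs_pow]
    simp
  rw [habs]
  have p1 := cerr_pos α hirr h0 h1 l
  have p2 := cerr_pos α hirr h0 h1 (l + 1)
  have hq0 : (0 : ℤ) ≤ qd α l := by positivity
  have hq1 : (0 : ℤ) ≤ qd α (l + 1) := by positivity
  rcases lt_trichotomy x 0 with hx0 | hx0 | hx0
  · have hy0 : 0 ≤ y := by
      by_contra hcon
      push Not at hcon
      nlinarith
    have hx1 : (x : ℝ) ≤ -1 := by exact_mod_cast (by omega : x ≤ -1)
    have hy1 : (0 : ℝ) ≤ y := by exact_mod_cast hy0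
    rw [le_abs]
    right
    nlinarith [mul_nonneg hy1 p2.le]
  · exfalso
    rw [hx0] at hk'
    have : 0 < y := by
      by_contra hcon
      push Not at hcon
      nlinarith
    nlinarith
  · have hy0 : y ≤ 0 := by
      by_contra hcon
      push Not at hcon
      nlinarith
    have hx1 : (1 : ℝ) ≤ x := by exact_mod_cast (by omega : 1 ≤ x)
    have hy1 : (y : ℝ) ≤ 0 := by exact_mod_cast hy0
    rw [le_abs]
    left
    nlinarith [mul_nonneg (neg_nonneg.2 hy1) p2.le]

lemma floor_add_mul (α : ℝ) (hirr : Irrational α) (k Q P : ℤ) (hk : k + Q ≠ 0)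
    (h : ∀ p : ℤ, |(Q : ℝ) * α - P| ≤ |(k : ℝ) * α - p|) :
    ⌊((k + Q : ℤ) : ℝ) * α⌋ = ⌊(k : ℝ) * α⌋ + P := by
  have f1 := Int.floor_le ((k : ℝ) * α)
  have f2 := Int.lt_floor_add_one ((k : ℝ) * α)
  have a1 := h ⌊(k : ℝ) * α⌋
  have a2 := h (⌊(k : ℝ) * α⌋ + 1)
  push_cast at a2
  rw [abs_of_nonneg (sub_nonneg.2 f1)] at a1
  rw [abs_of_neg (sub_neg.2 f2)] at a2
  have b1 := neg_abs_le ((Q : ℝ) * α - P)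
  have b2 := le_abs_self ((Q : ℝ) * α - P)
  have hne : ((k + Q : ℤ) : ℝ) * α ≠ ((⌊(k : ℝ) * α⌋ + 1 + P : ℤ) : ℝ) :=
    (hirr.intCast_mul hk).ne_int _
  rw [Int.floor_eq_iff]
  push_cast at hne ⊢
  exact ⟨by linarith, lt_of_le_of_ne (by linarith) (by intro h; apply hne; linarith)⟩

/-! ### The circle map sequence -/

lemma v0_indicator (α : ℝ) (h0 : 0 < α) (h1 : α < 1) (n : ℤ) :
    (if v0 α n = true then (1 : ℤ) else 0)
      = ⌊((n + 1 : ℤ) : ℝ) * α⌋ - ⌊(n : ℝ) * α⌋ := by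
  have e : ((n + 1 : ℤ) : ℝ) * α = (Int.fract ((n : ℝ) * α) + α) + (⌊(n : ℝ) * α⌋ : ℤ) := by
    unfold Int.fract
    push_cast
    ring
  rw [e, Int.floor_add_intCast]
  have f0 := Int.fract_nonneg ((n : ℝ) * α)
  have f1 := Int.fract_lt_one ((n : ℝ) * α)
  unfold v0
  split_ifs with h
  · have h' := of_decide_eq_true h
    have : ⌊Int.fract ((n : ℝ) * α) + α⌋ = 1 := by
      rw [Int.floor_eq_iff]
      constructor <;> push_cast <;> linarith
    omega
  · have h' : ¬ (1 - α ≤ Int.fract ((n : ℝ) * α)) := by simpa using h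
    have : ⌊Int.fract ((n : ℝ) * α) + α⌋ = 0 := by
      rw [Int.floor_eq_iff]
      constructor <;> push_cast <;> linarith
    omega

lemma bool_eq_of_indicator {a b : Bool}
    (h : (if a = true then (1 : ℤ) else 0) = if b = true then (1 : ℤ) else 0) : a = b := by
  cases a <;> cases b <;> simp_all

lemma v0_add_qd (α : ℝ) (hirr : Irrational α) (h0 : 0 < α) (h1 : α < 1) (l : ℕ) (k : ℤ)
    (hk : 1 ≤ k) (hkq : k + 1 < qd α (l + 1)) : v0 α (k + qd α l) = v0 α k := by
  have key : ∀ j : ℤ, 1 ≤ j → j < qd α (l + 1) →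
      ⌊((j + qd α l : ℤ) : ℝ) * α⌋ = ⌊(j : ℝ) * α⌋ + pd α l := by
    intro j hj hjq
    apply floor_add_mul α hirr j (qd α l) (pd α l) (by positivity)
    intro p
    push_cast
    rw [qd_mul_sub_pd α hirr h0 h1 l, abs_mul, abs_neg, abs_pow]
    simpa [abs_of_pos (cerr_pos α hirr h0 h1 l)] using
      cerr_le_abs_sub α hirr h0 h1 l j p hj hjq
  apply bool_eq_of_indicator
  rw [v0_indicator α h0 h1, v0_indicator α h0 h1, key k hk (by omega),
    show k + (qd α l : ℤ) + 1 = (k + 1) + qd α l by ring, key (k + 1) (by omega) hkq]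
  ring

lemma v0_sub_qd_add_qd (α : ℝ) (hirr : Irrational α) (h0 : 0 < α) (h1 : α < 1) (l : ℕ) (k : ℤ)
    (hk : 1 ≤ k) (hkq : k + 2 ≤ qd α l + qd α (l + 1)) :
    v0 α (k - (qd α l + qd α (l + 1))) = v0 α k := by
  have hle := qd_le_succ α (one_le_pq α hirr h0 h1) l
  have herr : |((qd α l + qd α (l + 1) : ℤ) : ℝ) * α - (pd α l + pd α (l + 1) : ℤ)|
      ≤ cerr α l := by
    have e : ((qd α l + qd α (l + 1) : ℤ) : ℝ) * α - (pd α l + pd α (l + 1) : ℤ)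
        = -(-1) ^ l * (cerr α l - cerr α (l + 1)) := by
      have e1 := qd_mul_sub_pd α hirr h0 h1 l
      have e2 := qd_mul_sub_pd α hirr h0 h1 (l + 1)
      rw [pow_succ] at e2
      push_cast
      linear_combination e1 + e2
    have p1 := cerr_pos α hirr h0 h1 (l + 1)
    have p2 := cerr_succ_lt α hirr h0 h1 l
    rw [e, abs_mul, abs_neg, abs_pow, abs_of_pos (by linarith : 0 < cerr α l - cerr α (l + 1))]
    simp [p1.le]
  have hneq : qd α l ≠ qd α (l + 1) := by
    intro heq
    have hdet := qd_pd_det α l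
    rw [← heq, ← mul_sub] at hdet
    have hu : IsUnit (qd α l : ℤ) := by
      apply isUnit_of_mul_isUnit_left (y := pd α l - pd α (l + 1))
      rw [hdet]
      exact (isUnit_one.neg).pow l
    rcases Int.isUnit_iff.1 hu with h | h <;> omega
  have key : ∀ j : ℤ, 1 ≤ j → j < qd α l + qd α (l + 1) →
      ⌊((j - (qd α l + qd α (l + 1)) : ℤ) : ℝ) * α⌋
        = ⌊(j : ℝ) * α⌋ - (pd α l + pd α (l + 1)) := by
    intro j hj hjq
    by_cases hc : j < qd α (l + 1)
    · have := floor_add_mul α hirr j (-(qd α l + qd α (l + 1))) (-(pd α l + pd α (l + 1)))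
        (by omega) (by
          intro p
          refine le_trans ?_ (cerr_le_abs_sub α hirr h0 h1 l j p hj hc)
          rw [← abs_neg]
          refine le_of_eq_of_le ?_ herr
          congr 1
          push_cast
          ring)
      simpa [sub_eq_add_neg] using this
    · have := floor_add_mul α hirr (j - (qd α l + qd α (l + 1))) (qd α l + qd α (l + 1))
        (pd α l + pd α (l + 1)) (by omega) (by
          intro p
          refine le_trans herr (le_of_le_of_eq
            (cerr_le_abs_sub α hirr h0 h1 l (qd α l + qd α (l + 1) - j) (-p)
              (by omega) (by omega)) ?_)
          rw [← abs_neg]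
          congr 1
          push_cast
          ring)
      rw [sub_add_cancel] at this
      omega
  apply bool_eq_of_indicator
  rw [v0_indicator α h0 h1, v0_indicator α h0 h1, key k hk (by omega),
    show k - ((qd α l : ℤ) + qd α (l + 1)) + 1 = (k + 1) - (qd α l + qd α (l + 1)) by ring,
    key (k + 1) (by omega) (by omega)]
  ring

lemma v0_qd (α : ℝ) (hirr : Irrational α) (h0 : 0 < α) (h1 : α < 1) (k : ℕ) :
    v0 α (qd α (k + 2)) = decide (Even k) := by
  have hanti : Antitone (cerr α) :=
    antitone_nat_of_succ_le fun n => (cerr_succ_lt α hirr h0 h1 n).le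
  have c1 : cerr α 1 = α := by simp [cerr]
  have c2 : cerr α (k + 2) < α :=
    ((cerr_succ_lt α hirr h0 h1 (k + 1)).trans_le
      (hanti (show 1 ≤ k + 1 by omega))).trans_eq c1
  have pos := cerr_pos α hirr h0 h1 (k + 2)
  have e := qd_mul_sub_pd α hirr h0 h1 (k + 2)
  rw [pow_add] at e
  apply bool_eq_of_indicator
  rw [v0_indicator α h0 h1]
  by_cases hk : Even k
  · rw [hk.neg_one_pow] at e
    have f1 : ⌊((qd α (k + 2) : ℤ) : ℝ) * α⌋ = pd α (k + 2) - 1 := by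
      rw [Int.floor_eq_iff]
      constructor <;> push_cast <;> linarith
    have f2 : ⌊((qd α (k + 2) + 1 : ℤ) : ℝ) * α⌋ = pd α (k + 2) := by
      rw [Int.floor_eq_iff]
      constructor <;> push_cast <;> linarith
    rw [f1, f2]
    simp [hk]
  · have hk1 : 1 ≤ k := by
      rcases Nat.eq_zero_or_pos k with rfl | h
      · simp at hk
      · exact h
    rw [(Nat.not_even_iff_odd.1 hk).neg_one_pow] at e
    have c3 : cerr α (k + 2) < 1 - α := by
      have h3 := hanti (show 3 ≤ k + 2 by omega)
      have h2 := cerr_succ_lt α hirr h0 h1 2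
      have h4 := cerr_add_two α hirr h0 h1 0
      have h5 : (1 : ℝ) ≤ pq α 0 := by exact_mod_cast one_le_pq α hirr h0 h1 0
      simp only [zero_add, c1] at h4
      have c0 : cerr α 0 = 1 := rfl
      norm_num at h2
      nlinarith
    have f1 : ⌊((qd α (k + 2) : ℤ) : ℝ) * α⌋ = pd α (k + 2) := by
      rw [Int.floor_eq_iff]
      constructor <;> push_cast <;> linarith
    have f2 : ⌊((qd α (k + 2) + 1 : ℤ) : ℝ) * α⌋ = pd α (k + 2) := by
      rw [Int.floor_eq_iff]
      constructor <;> push_cast <;> linarith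
    rw [f1, f2]
    simp [hk]

lemma v0_eq_false (α : ℝ) (hirr : Irrational α) (h0 : 0 < α) (h1 : α < 1) (k : ℤ)
    (hk : 1 ≤ k) (hkq : k < pq α 0) : v0 α k = false := by
  have c2 := cerr_pos α hirr h0 h1 2
  rw [cerr_add_two α hirr h0 h1 0] at c2
  simp only [cerr, Function.iterate_zero, id_eq, mul_one] at c2
  have key : ∀ j : ℤ, 0 ≤ j → j ≤ pq α 0 → ⌊(j : ℝ) * α⌋ = 0 := by
    intro j hj hjq
    have hj' : (0 : ℝ) ≤ j := by exact_mod_cast hj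
    have hjq' : (j : ℝ) ≤ pq α 0 := by exact_mod_cast hjq
    rw [Int.floor_eq_iff]
    constructor <;> push_cast <;> nlinarith
  apply bool_eq_of_indicator
  rw [v0_indicator α h0 h1, key k (by omega) (by omega), key (k + 1) (by omega) (by omega)]
  simp

/-! ### The hull -/

lemma exists_translate_of_mem_hull (α : ℝ) (v : ℤ → Bool) (hv : v ∈ hull α) (F : Finset ℤ) :
    ∃ M : ℤ, ∀ k ∈ F, v k = v0 α (k - M) := by
  have hopen : IsOpen {u : ℤ → Bool | ∀ k ∈ F, u k = v k} := by
    have : {u : ℤ → Bool | ∀ k ∈ F, u k = v k} = (F : Set ℤ).pi fun k => {v k} := by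
      ext u
      simp [Set.mem_pi]
    rw [this]
    exact isOpen_set_pi F.finite_toSet fun _ _ => isOpen_discrete _
  obtain ⟨u, hu, M, rfl⟩ := mem_closure_iff.1 hv _ hopen fun k _ => rfl
  exact ⟨M, fun k hk => (hu k hk).symm⟩

lemma eq_v0_of_mem_hull_of_exchange (α : ℝ) (h0 : 0 < α) (h1 : α < 1) (v w : ℤ → Bool) (m : ℤ)
    (hv : v ∈ hull α) (hw : w ∈ hull α) (hvw : ∀ k, k ≠ m - 1 → k ≠ m → w k = v k)
    (v1 : v (m - 1) = true) (v2 : v m = false) (w1 : w (m - 1) = false) (w2 : w m = true)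
    (k : ℤ) (hk0 : k ≠ 0) (hk1 : k ≠ -1) : v (m + k) = v0 α k := by
  obtain ⟨K, hK⟩ : ∃ K : ℕ, -(K : ℤ) ≤ k ∧ k + 1 ≤ K := ⟨k.natAbs + 1, by omega, by omega⟩
  have hK1 : 1 ≤ K := by omega
  obtain ⟨M, hM⟩ := exists_translate_of_mem_hull α v hv (Finset.Icc (m - K) (m + K))
  obtain ⟨M', hM'⟩ := exists_translate_of_mem_hull α w hw (Finset.Icc (m - K) (m + K))
  set F : ℤ → ℤ := fun j => ⌊((m + j - M : ℤ) : ℝ) * α⌋ with hF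
  set F' : ℤ → ℤ := fun j => ⌊((m + j - M' : ℤ) : ℝ) * α⌋ with hF'
  have dF : ∀ j : ℤ, -(K : ℤ) ≤ j → j ≤ K →
      (if v (m + j) = true then (1 : ℤ) else 0) = F (j + 1) - F j := by
    intro j hj1 hj2
    rw [hM (m + j) (by simp; omega), v0_indicator α h0 h1, hF]
    simp only
    rw [show m + (j + 1) - M = m + j - M + 1 by ring]
  have dF' : ∀ j : ℤ, -(K : ℤ) ≤ j → j ≤ K →
      (if w (m + j) = true then (1 : ℤ) else 0) = F' (j + 1) - F' j := by
    intro j hj1 hj2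
    rw [hM' (m + j) (by simp; omega), v0_indicator α h0 h1, hF']
    simp only
    rw [show m + (j + 1) - M' = m + j - M' + 1 by ring]
  have hstep : ∀ j : ℤ, -(K : ℤ) ≤ j → j ≤ K → j ≠ 0 → j ≠ -1 →
      F (j + 1) - F j = F' (j + 1) - F' j := by
    intro j a b c d
    rw [← dF j a b, ← dF' j a b, hvw (m + j) (by omega) (by omega)]
  have z1 : F 1 - F 0 = 0 := by
    have := dF 0 (by omega) (by omega)
    simpa [v2] using this.symm
  have z2 : F 0 - F (-1) = 1 := by
    have := dF (-1) (by omega) (by omega)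
    simpa [← sub_eq_add_neg, v1] using this.symm
  have z3 : F' 1 - F' 0 = 1 := by
    have := dF' 0 (by omega) (by omega)
    simpa [w2] using this.symm
  have z4 : F' 0 - F' (-1) = 0 := by
    have := dF' (-1) (by omega) (by omega)
    simpa [← sub_eq_add_neg, w1] using this.symm
  have hpos : ∀ j : ℕ, j + 1 ≤ K → F' (j + 1) - F (j + 1) = F' 0 - F 0 + 1 := by
    intro j
    induction j with
    | zero => intro _; simp only [Nat.cast_zero, zero_add]; omega
    | succ j ih =>
      intro hj
      have := hstep (j + 1) (by omega) (by omega) (by omega) (by omega)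
      have := ih (by omega)
      push_cast
      omega
  have hneg : ∀ j : ℕ, j + 1 ≤ K → F' (-(j + 1)) - F (-(j + 1)) = F' 0 - F 0 + 1 := by
    intro j
    induction j with
    | zero => intro _; simp only [Nat.cast_zero, zero_add]; omega
    | succ j ih =>
      intro hj
      have h2 := hstep (-((j + 1 : ℕ) + 1)) (by omega) (by omega) (by omega) (by omega)
      have := ih (by omega)
      rw [show (-(((j + 1 : ℕ) : ℤ) + 1) + 1) = -((j : ℤ) + 1) by push_cast; ring] at h2
      omega
  have hD : ∀ j : ℤ, -(K : ℤ) ≤ j → j ≤ K → j ≠ 0 → F' j - F j = F' 0 - F 0 + 1 := by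
    intro j a b c
    rcases lt_or_gt_of_ne c with h | h
    · have := hneg (-j - 1).toNat (by omega)
      rwa [show -((((-j - 1).toNat : ℕ) : ℤ) + 1) = j by omega] at this
    · have := hpos (j - 1).toNat (by omega)
      rwa [show ((((j - 1).toNat : ℕ) : ℤ) + 1) = j by omega] at this
  have hfl : ∀ j : ℤ, -(K : ℤ) ≤ j → j ≤ K → j ≠ 0 → F j - F 0 = ⌊(j : ℝ) * α⌋ := by
    intro j a b c
    have h3 := hD j a b c
    apply le_antisymm
    · have : F' j - F' 0 - 1 ≤ ⌊(j : ℝ) * α⌋ := by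
        rw [Int.le_floor]
        have g1 : ((F' j : ℤ) : ℝ) ≤ _ := Int.floor_le (((m + j - M' : ℤ) : ℝ) * α)
        have g2 : _ < ((F' 0 : ℤ) : ℝ) + 1 := Int.lt_floor_add_one (((m + 0 - M' : ℤ) : ℝ) * α)
        push_cast at g1 g2 ⊢
        linarith
      omega
    · have : ⌊(j : ℝ) * α⌋ < F j - F 0 + 1 := by
        rw [Int.floor_lt]
        have g1 : _ < ((F j : ℤ) : ℝ) + 1 := Int.lt_floor_add_one (((m + j - M : ℤ) : ℝ) * α)
        have g2 : ((F 0 : ℤ) : ℝ) ≤ _ := Int.floor_le (((m + 0 - M : ℤ) : ℝ) * α)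
        push_cast at g1 g2 ⊢
        linarith
      omega
  apply bool_eq_of_indicator
  rw [dF k (by omega) (by omega), v0_indicator α h0 h1,
    ← hfl k (by omega) (by omega) hk0, ← hfl (k + 1) (by omega) (by omega) (by omega)]
  ring

/-! ### Occurrences of words -/

/-- The word `w` occupies the sites `t + 1, …, t + |w|` of `v`. -/
def Occ (v : ℤ → Bool) (t : ℤ) (w : List Bool) : Prop := wordAt v (t + 1) w.length = w

lemma wordAt_eq_map (v : ℤ → Bool) (t : ℤ) (n : ℕ) :
    wordAt v t n = (List.range n).map fun i : ℕ => v (t + i) := by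
  unfold wordAt
  rw [bind_pure_comp]
  exact List.map_map

lemma wordAt_add (v : ℤ → Bool) (t : ℤ) (a b : ℕ) :
    wordAt v t (a + b) = wordAt v t a ++ wordAt v (t + a) b := by
  simp [wordAt_eq_map, List.range_add, add_assoc]

lemma length_wordAt (v : ℤ → Bool) (t : ℤ) (a : ℕ) : (wordAt v t a).length = a := by
  simp [wordAt_eq_map]

lemma wordAt_congr {u v : ℤ → Bool} {s t : ℤ} {n : ℕ}
    (h : ∀ i : ℕ, i < n → u (s + i) = v (t + i)) : wordAt u s n = wordAt v t n := by
  rw [wordAt_eq_map, wordAt_eq_map]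
  apply List.map_congr_left
  intro i hi
  exact h i (List.mem_range.1 hi)

lemma occ_append (v : ℤ → Bool) (t : ℤ) (w₁ w₂ : List Bool) :
    Occ v t (w₁ ++ w₂) ↔ Occ v t w₁ ∧ Occ v (t + w₁.length) w₂ := by
  unfold Occ
  rw [List.length_append, wordAt_add, show t + 1 + (w₁.length : ℤ) = t + w₁.length + 1 by ring]
  exact ⟨fun h => List.append_inj h (length_wordAt _ _ _), fun h => by rw [h.1, h.2]⟩

lemma Occ.of_prefix {v : ℤ → Bool} {t : ℤ} {w₁ w₂ : List Bool} (h : Occ v t w₂)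
    (hp : w₁ <+: w₂) : Occ v t w₁ := by
  obtain ⟨r, rfl⟩ := hp
  exact ((occ_append v t w₁ r).1 h).1

lemma occ_singleton (v : ℤ → Bool) (t : ℤ) (b : Bool) : Occ v t [b] ↔ v (t + 1) = b := by
  simp [Occ, wordAt]

lemma Occ.congr {u v : ℤ → Bool} {s t : ℤ} {w : List Bool} (h : Occ v t w)
    (huv : ∀ i : ℤ, 1 ≤ i → i ≤ w.length → u (s + i) = v (t + i)) : Occ u s w := by
  unfold Occ at *
  rw [← h, length_wordAt]
  apply wordAt_congr
  intro i hi
  have := huv (i + 1) (by omega) (by omega)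
  rwa [show s + 1 + (i : ℤ) = s + (i + 1) by ring, show t + 1 + (i : ℤ) = t + (i + 1) by ring]

lemma occ_replicate (v : ℤ → Bool) (t : ℤ) (n : ℕ) (b : Bool) :
    Occ v t (List.replicate n b) ↔ ∀ i : ℤ, 1 ≤ i → i ≤ n → v (t + i) = b := by
  unfold Occ
  rw [wordAt_eq_map, List.length_replicate, List.eq_replicate_iff]
  simp only [List.length_map, List.length_range, List.mem_map, List.mem_range, true_and,
    forall_exists_index, and_imp, forall_apply_eq_imp_iff₂]
  constructor
  · intro h i hi1 hi2
    have := h (i - 1).toNat (by omega)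
    rwa [show t + 1 + ((i - 1).toNat : ℤ) = t + i by omega] at this
  · intro h i hi
    have := h (i + 1) (by omega) (by omega)
    rwa [show t + 1 + (i : ℤ) = t + (i + 1) by ring]

/-! ### The words `sₙ` and the central words -/

lemma sw_add_three (α : ℝ) (k : ℕ) : sw α (k + 3)
    = (List.replicate (pq α (k + 1)) (sw α (k + 2))).flatten ++ sw α (k + 1) := rfl

lemma sw_two (α : ℝ) : sw α 2 = List.replicate (pq α 0 - 1) false ++ [true] := by
  simp [sw]

lemma length_sw (α : ℝ) (hq : ∀ k, 1 ≤ pq α k) (k : ℕ) :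
    (sw α (k + 1)).length = qd α (k + 1) := by
  induction k using Nat.twoStepInduction with
  | zero => simp [sw, qd]
  | one =>
    have := hq 0
    simp [sw_two, qd]
    omega
  | more k ih1 ih2 =>
    rw [sw_add_three]
    simp only [List.length_append, List.length_flatten, List.map_replicate, List.sum_replicate,
      ih1, ih2, smul_eq_mul]
    rfl

lemma exists_sw_eq_append (α : ℝ) (k : ℕ) : ∃ w, sw α k = w ++ [decide (Even k)] := by
  induction k using Nat.strong_induction_on with
  | _ k ih =>
    match k with
    | 0 => exact ⟨[], by simp [sw]⟩
    | 1 => exact ⟨[], by simp [sw]⟩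
    | 2 => exact ⟨_, by rw [sw_two]; simp; rfl⟩
    | k + 3 =>
      obtain ⟨w, hw⟩ := ih (k + 1) (by omega)
      refine ⟨(List.replicate (pq α (k + 1)) (sw α (k + 2))).flatten ++ w, ?_⟩
      rw [sw_add_three, hw, List.append_assoc]
      congr 3
      simp [Nat.even_add_one, show k + 3 = k + 1 + 1 + 1 by rfl]

/-- `cw α k` is the longest common prefix of `s_{k+1} s_k` and `s_k s_{k+1}`. -/
def cw (α : ℝ) : ℕ → List Bool
  | 0 => List.replicate (pq α 0 - 1) false
  | (k+1) => (List.replicate (pq α (k + 1)) (sw α (k + 2))).flatten ++ cw α k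

lemma sw_append_sw (α : ℝ) (k : ℕ) :
    sw α (k + 2) ++ sw α (k + 1) = cw α k ++ [decide (Even k), !decide (Even k)] ∧
    sw α (k + 1) ++ sw α (k + 2) = cw α k ++ [!decide (Even k), decide (Even k)] := by
  induction k with
  | zero =>
    have h : sw α 1 = [false] := rfl
    simp only [zero_add, sw_two, h, cw]
    constructor
    · simp
    · rw [← List.append_assoc, ← List.replicate_one, ← List.replicate_add, add_comm,
        List.replicate_add]
      simp
  | succ k ih =>
    have hb : decide (Even (k + 1)) = !decide (Even k) := by
      rw [← decide_not, decide_eq_decide]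
      exact Nat.even_add_one
    have hcomm : ∀ (n : ℕ) (w : List Bool), w ++ (List.replicate n w).flatten
        = (List.replicate n w).flatten ++ w := by
      intro n w
      rw [← List.flatten_cons, ← List.replicate_succ, List.replicate_succ', List.flatten_append]
      simp
    rw [hb, show k + 1 + 2 = k + 3 by rfl, sw_add_three, show k + 1 + 1 = k + 2 by rfl]
    simp only [cw, List.append_assoc, Bool.not_not]
    constructor
    · rw [ih.2]
    · rw [← List.append_assoc, hcomm, List.append_assoc, ih.1]

lemma length_cw (α : ℝ) (hq : ∀ k, 1 ≤ pq α k) (k : ℕ) :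
    (cw α k).length + 2 = qd α (k + 1) + qd α (k + 2) := by
  have := congrArg List.length (sw_append_sw α k).1
  simp only [List.length_append, List.length_cons, List.length_nil] at this
  have h1 := length_sw α hq k
  have h2 : (sw α (k + 2)).length = qd α (k + 2) := length_sw α hq (k + 1)
  omega

lemma cw_concat_prefix_long (α : ℝ) (hq : ∀ k, 1 ≤ pq α k) (k : ℕ) :
    cw α k ++ [decide (Even k)] <+: sw α (k + 2) ++ cw α k := by
  have h := sw_append_sw α k
  apply List.prefix_of_prefix_length_le (l₃ := sw α (k + 2) ++ (sw α (k + 1) ++ sw α (k + 2)))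
  · rw [← List.append_assoc, h.1]
    exact ⟨[!decide (Even k)] ++ sw α (k + 2), by simp⟩
  · rw [h.2, ← List.append_assoc]
    exact List.prefix_append _ _
  · have := one_le_qd α hq (k + 1)
    have h2 : (sw α (k + 2)).length = qd α (k + 1 + 1) := length_sw α hq (k + 1)
    simp
    omega

lemma cw_concat_prefix_short (α : ℝ) (hq : ∀ k, 1 ≤ pq α k) (k : ℕ) :
    cw α k ++ [!decide (Even k)] <+: sw α (k + 1) ++ cw α k := by
  have h := sw_append_sw α k
  apply List.prefix_of_prefix_length_le (l₃ := sw α (k + 1) ++ (sw α (k + 2) ++ sw α (k + 1)))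
  · rw [← List.append_assoc, h.2]
    exact ⟨[decide (Even k)] ++ sw α (k + 1), by simp⟩
  · rw [h.1, ← List.append_assoc]
    exact List.prefix_append _ _
  · have := one_le_qd α hq k
    have := length_sw α hq k
    simp
    omega

lemma cw_prefix_replicate (α : ℝ) (hq : ∀ k, 1 ≤ pq α k) (k j : ℕ) :
    cw α k <+: (List.replicate j (sw α (k + 2))).flatten ++ cw α k := by
  induction j with
  | zero => simp
  | succ j ih =>
    rw [List.replicate_succ, List.flatten_cons, List.append_assoc]
    exact ((List.prefix_append _ _).trans (cw_concat_prefix_long α hq k)).trans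
      ((List.prefix_append_right_inj _).2 ih)

lemma cw_concat_prefix_replicate (α : ℝ) (hq : ∀ k, 1 ≤ pq α k) (k j : ℕ) :
    cw α k ++ [decide (Even k)]
      <+: (List.replicate (j + 1) (sw α (k + 2))).flatten ++ cw α k := by
  rw [List.replicate_succ, List.flatten_cons, List.append_assoc]
  exact (cw_concat_prefix_long α hq k).trans
    ((List.prefix_append_right_inj _).2 (cw_prefix_replicate α hq k j))

lemma occ_v0 (α : ℝ) (hirr : Irrational α) (h0 : 0 < α) (h1 : α < 1) (k : ℕ) :
    Occ (v0 α) 0 (sw α (k + 2)) ∧ Occ (v0 α) 0 (cw α k) := by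
  have hq := one_le_pq α hirr h0 h1
  induction k with
  | zero =>
    have h : Occ (v0 α) 0 (cw α 0) := by
      rw [cw, occ_replicate]
      intro i hi1 hi2
      have := hq 0
      rw [zero_add]
      exact v0_eq_false α hirr h0 h1 i hi1 (by omega)
    refine ⟨?_, h⟩
    rw [zero_add, sw_two, occ_append, occ_singleton]
    refine ⟨h, ?_⟩
    have h2 := v0_qd α hirr h0 h1 0
    have := hq 0
    simpa [qd, show (((pq α 0 - 1 : ℕ) : ℤ)) + 1 = pq α 0 by omega] using h2
  | succ k ih =>
    have hlen := length_cw α hq k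
    have hs := length_sw α hq (k + 1)
    have hrec : qd α (k + 3) = pq α (k + 1) * qd α (k + 2) + qd α (k + 1) := rfl
    have hrep : ∀ j : ℕ, j ≤ pq α (k + 1) →
        Occ (v0 α) 0 ((List.replicate j (sw α (k + 2))).flatten ++ cw α k) := by
      intro j
      induction j with
      | zero => intro _; simpa using ih.2
      | succ j ihj =>
        intro hj
        rw [List.replicate_succ, List.flatten_cons, List.append_assoc, occ_append]
        refine ⟨ih.1, (ihj (by omega)).congr ?_⟩
        intro i hi1 hi2
        simp only [List.length_append, List.length_flatten, List.map_replicate,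
          List.sum_replicate, smul_eq_mul, hs] at hi2 ⊢
        have hmul : (j + 1) * qd α (k + 2) ≤ pq α (k + 1) * qd α (k + 2) :=
          Nat.mul_le_mul_right _ hj
        have hb : i + 1 < (qd α (k + 3) : ℤ) := by
          rw [hrec]
          zify at hmul hlen
          push_cast at hi2 ⊢
          nlinarith
        rw [zero_add, zero_add, add_comm]
        exact v0_add_qd α hirr h0 h1 (k + 2) i hi1 hb
    have hcw : Occ (v0 α) 0 (cw α (k + 1)) := hrep _ le_rfl
    refine ⟨?_, hcw⟩
    obtain ⟨w, hw⟩ := exists_sw_eq_append α (k + 3)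
    have hl3 := length_sw α hq (k + 2)
    have hwl : w.length + 1 = qd α (k + 3) := by
      rw [← hl3, show k + 2 + 1 = k + 3 by rfl, hw]
      simp
    have hpre : w <+: cw α (k + 1) := by
      apply List.prefix_of_prefix_length_le (l₃ := sw α (k + 3) ++ sw α (k + 2))
      · rw [hw, List.append_assoc]
        exact List.prefix_append _ _
      · have := (sw_append_sw α (k + 1)).1
        rw [show k + 3 = k + 1 + 2 by rfl, show k + 2 = k + 1 + 1 by rfl, this]
        exact List.prefix_append _ _
      · have h3 : _ = qd α (k + 2) + qd α (k + 3) := length_cw α hq (k + 1)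
        have h4 : 1 ≤ qd α (k + 2) := one_le_qd α hq (k + 1)
        omega
    rw [show k + 1 + 2 = k + 3 by rfl, hw, occ_append, occ_singleton]
    refine ⟨hcw.of_prefix hpre, ?_⟩
    have h5 := v0_qd α hirr h0 h1 (k + 1)
    rw [show (0 : ℤ) + w.length + 1 = qd α (k + 1 + 2) by
      rw [show k + 1 + 2 = k + 3 by rfl, ← hwl]; push_cast; ring, h5]
    simp [Nat.even_add_one, show k + 3 = k + 1 + 1 + 1 by rfl]

lemma occ_v0_long (α : ℝ) (hirr : Irrational α) (h0 : 0 < α) (h1 : α < 1) (k : ℕ) :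
    Occ (v0 α) 0 (cw α k ++ [decide (Even k)]) := by
  have hq := one_le_pq α hirr h0 h1
  have h := (occ_v0 α hirr h0 h1 (k + 1)).2
  obtain ⟨a, ha⟩ := Nat.exists_eq_add_of_le' (hq (k + 1))
  rw [cw, ha] at h
  exact h.of_prefix (cw_concat_prefix_replicate α hq k a)

/-! ### Cut points -/

/-- From every site of `C` one can advance inside `C` along an `s_k`- or `s_{k+1}`-block of `v`,
and `C` is unbounded below. -/
def CutSet (α : ℝ) (v : ℤ → Bool) (k : ℕ) (C : Set ℤ) : Prop :=
  (∀ t ∈ C, (Occ v t (sw α (k + 1)) ∧ t + qd α (k + 1) ∈ C) ∨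
    (Occ v t (sw α (k + 2)) ∧ t + qd α (k + 2) ∈ C)) ∧ ∀ t, ∃ u ∈ C, u ≤ t

lemma CutSet.occ_cw {α : ℝ} (hq : ∀ k, 1 ≤ pq α k) {v : ℤ → Bool} {k : ℕ} {C : Set ℤ}
    (hC : CutSet α v k C) {t : ℤ} (ht : t ∈ C) : Occ v t (cw α k) := by
  have key : ∀ N : ℕ, ∀ t ∈ C, Occ v t ((cw α k).take N) := by
    intro N
    induction N using Nat.strong_induction_on with
    | _ N ih =>
      intro t ht
      rcases Nat.eq_zero_or_pos N with rfl | hN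
      · simp [Occ, wordAt]
      have aux : ∀ s : List Bool, 1 ≤ s.length → cw α k <+: s ++ cw α k → Occ v t s →
          t + s.length ∈ C → Occ v t ((cw α k).take N) := by
        intro s hs hp ho hm
        have h2 : Occ v t (s ++ (cw α k).take (N - s.length)) :=
          (occ_append _ _ _ _).2 ⟨ho, ih (N - s.length) (by omega) _ hm⟩
        have h3 : (cw α k).take N <+: (s ++ cw α k).take N := hp.take N
        refine h2.of_prefix (h3.trans ?_)
        rcases Nat.le_total N s.length with hle | hle
        · rw [List.take_append_of_le_length hle]
          exact (List.take_prefix _ _).trans (List.prefix_append _ _)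
        · rw [List.take_append, List.take_of_length_le hle]
      rcases hC.1 t ht with h | h
      · refine aux _ ?_ ((List.prefix_append _ _).trans (cw_concat_prefix_short α hq k)) h.1 ?_
        · rw [length_sw α hq k]
          exact one_le_qd α hq k
        · rw [length_sw α hq k]
          exact h.2
      · refine aux _ ?_ ((List.prefix_append _ _).trans (cw_concat_prefix_long α hq k)) h.1 ?_
        · rw [length_sw α hq (k + 1)]
          exact one_le_qd α hq (k + 1)
        · rw [length_sw α hq (k + 1)]
          exact h.2
  simpa using key (cw α k).length t ht

lemma Occ.false_of_concat {v : ℤ → Bool} {t : ℤ} {w : List Bool} {b : Bool}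
    (h : Occ v t (w ++ [b])) (h' : Occ v t (w ++ [!b])) : False := by
  rw [occ_append, occ_singleton] at h h'
  have := h.2.symm.trans h'.2
  simp at this

lemma CutSet.refinement {α : ℝ} (hq : ∀ k, 1 ≤ pq α k) {v : ℤ → Bool} {k : ℕ} {C : Set ℤ}
    (hC : CutSet α v (k + 1) C) :
    CutSet α v k (C ∪ {t | ∃ j : ℕ, 1 ≤ j ∧ j ≤ pq α (k + 1) ∧
      Occ v t ((List.replicate (pq α (k + 1) - j) (sw α (k + 2))).flatten ++ sw α (k + 1)) ∧
      t + ((pq α (k + 1) - j : ℕ) * qd α (k + 2) + qd α (k + 1) : ℕ) ∈ C}) := by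
  have hs := length_sw α hq (k + 1)
  refine ⟨?_, fun t => ?_⟩
  · rintro t (ht | ⟨j, hj1, hj2, ho, hm⟩)
    · rcases hC.1 t ht with h | h
      · exact Or.inr ⟨h.1, Or.inl h.2⟩
      · right
        have h1 := h.1
        obtain ⟨a, ha⟩ := Nat.exists_eq_add_of_le' (hq (k + 1))
        rw [show k + 1 + 2 = k + 3 by rfl, sw_add_three, ha, List.replicate_succ,
          List.flatten_cons, List.append_assoc, occ_append, hs] at h1
        refine ⟨h1.1, Or.inr ⟨1, le_rfl, hq _, ?_, ?_⟩⟩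
        · rw [ha, Nat.add_sub_cancel]
          exact h1.2
        · have hrec : qd α (k + 1 + 2) = pq α (k + 1) * qd α (k + 2) + qd α (k + 1) := rfl
          convert h.2 using 1
          rw [hrec, ha]
          rw [Nat.add_sub_cancel]
          push_cast
          ring
    · rcases Nat.lt_or_ge j (pq α (k + 1)) with hj | hj
      · right
        obtain ⟨a, ha⟩ : ∃ a, pq α (k + 1) - j = a + 1 := ⟨pq α (k + 1) - j - 1, by omega⟩
        rw [ha, List.replicate_succ, List.flatten_cons, List.append_assoc, occ_append, hs] at ho
        refine ⟨ho.1, Or.inr ⟨j + 1, by omega, by omega, ?_, ?_⟩⟩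
        · rw [show pq α (k + 1) - (j + 1) = a by omega]
          exact ho.2
        · rw [show pq α (k + 1) - (j + 1) = a by omega]
          rw [ha] at hm
          convert hm using 1
          push_cast
          ring
      · left
        rw [Nat.sub_eq_zero_of_le hj] at ho hm
        exact ⟨by simpa using ho, Or.inl (by simpa using hm)⟩
  · obtain ⟨u, hu, hut⟩ := hC.2 t
    exact ⟨u, Or.inl hu, hut⟩

lemma CutSet.mem_of_occ_cw {α : ℝ} (hq : ∀ k, 1 ≤ pq α k) {v : ℤ → Bool} {k : ℕ} {C : Set ℤ}
    (hC : CutSet α v k C) {t : ℤ} (ht : Occ v t (cw α k)) : t ∈ C := by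
  induction k generalizing C t with
  | zero =>
    obtain ⟨u, ⟨huC, hut⟩, hmax⟩ := Int.exists_greatest_of_bdd (P := fun u => u ∈ C ∧ u ≤ t)
      ⟨t, fun z hz => hz.2⟩ (hC.2 t)
    rcases eq_or_lt_of_le hut with rfl | hlt
    · exact huC
    exfalso
    rcases hC.1 u huC with h | h
    · have h1 : qd α (0 + 1) = 1 := rfl
      have := hmax _ ⟨h.2, by rw [h1]; omega⟩
      rw [h1] at this
      omega
    · have h1 : qd α (0 + 2) = pq α 0 := by simp [qd]
      have h2 : t < u + pq α 0 := by
        by_contra hcon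
        have := hmax _ ⟨h.2, by rw [h1]; omega⟩
        have := hq 0
        omega
      have h3 := h.1
      have := hq 0
      rw [zero_add, sw_two, occ_append, occ_singleton, List.length_replicate,
        show u + ((pq α 0 - 1 : ℕ) : ℤ) + 1 = u + pq α 0 by omega] at h3
      rw [cw, occ_replicate] at ht
      have h4 := ht (u + pq α 0 - t) (by omega) (by omega)
      rw [add_sub_cancel] at h4
      rw [h3.2] at h4
      exact Bool.noConfusion h4
  | succ k ih =>
    have hs := length_sw α hq (k + 1)
    have hs' := length_sw α hq k
    have hmem := ih (hC.refinement hq) (ht.of_prefix (cw_prefix_replicate α hq k _))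
    rcases hmem with hmem | ⟨j, hj1, hj2, ho, hm⟩
    · exact hmem
    exfalso
    obtain ⟨b, rfl⟩ := Nat.exists_eq_add_of_le' hj1
    rw [cw, show pq α (k + 1) = (pq α (k + 1) - (b + 1)) + (b + 1) by omega, List.replicate_add,
      List.flatten_append, List.append_assoc, occ_append] at ht
    rw [occ_append] at ho
    have hlong := ht.2.of_prefix (cw_concat_prefix_replicate α hq k b)
    refine hlong.false_of_concat (Occ.of_prefix (w₂ := sw α (k + 1) ++ sw α (k + 2)) ?_ ?_)
    · rw [occ_append]
      refine ⟨ho.2, ?_⟩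
      have hnext : ∀ u ∈ C, Occ v u (sw α (k + 2)) := by
        intro u hu
        rcases hC.1 u hu with h | h
        · exact h.1
        · obtain ⟨a, ha⟩ := Nat.exists_eq_add_of_le' (hq (k + 1))
          have h1 := h.1
          rw [show k + 1 + 2 = k + 3 by rfl, sw_add_three, ha, List.replicate_succ,
            List.flatten_cons, List.append_assoc, occ_append] at h1
          exact h1.1
      convert hnext _ hm using 1
      simp only [List.length_flatten, List.map_replicate, List.sum_replicate, smul_eq_mul, hs,
        hs']
      push_cast
      ring
    · rw [(sw_append_sw α k).2]
      exact ⟨[decide (Even k)], by simp⟩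

/-! ### Partitions -/

lemma BlockIs.occ {α : ℝ} (hq : ∀ k, 1 ≤ pq α k) {v : ℤ → Bool} {c : ℤ → ℤ} {i : ℤ} {k : ℕ}
    (h : BlockIs α v c i (k + 1)) : Occ v (c i) (sw α (k + 1)) := by
  have := h.2
  rwa [← length_sw α hq k] at this

lemma IsPartition.cutSet {α : ℝ} (hq : ∀ k, 1 ≤ pq α k) {v : ℤ → Bool} {c : ℤ → ℤ} {k : ℕ}
    (h : IsPartition α v (k + 1) c) : CutSet α v k (Set.range c) := by
  obtain ⟨-, -, -, -, hbot, hb⟩ := h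
  refine ⟨?_, fun t => ?_⟩
  · rintro _ ⟨i, rfl⟩
    rcases hb i with h | h
    · exact Or.inl ⟨h.occ hq, i + 1, by have := h.1; omega⟩
    · exact Or.inr ⟨h.occ hq, i + 1, by
        have h2 : c (i + 1) - c i = qd α (k + 2) := h.1
        omega⟩
  · obtain ⟨i, hi⟩ := (hbot.eventually_le_atBot t).exists
    exact ⟨c i, ⟨i, rfl⟩, hi⟩

lemma IsPartition.exists_block_long {α : ℝ} (hq : ∀ k, 1 ≤ pq α k) {v : ℤ → Bool} {c : ℤ → ℤ}
    {k : ℕ} (h : IsPartition α v (k + 1) c) {t : ℤ} (ht : Occ v t (cw α k ++ [decide (Even k)])) :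
    ∃ i, c i = t ∧ BlockIs α v c i (k + 1 + 1) := by
  have hC := h.cutSet hq
  obtain ⟨i, rfl⟩ := hC.mem_of_occ_cw hq (ht.of_prefix (List.prefix_append _ _))
  refine ⟨i, rfl, (h.2.2.2.2.2 i).resolve_left fun hb => ?_⟩
  refine ht.false_of_concat (Occ.of_prefix ((occ_append _ _ _ _).2 ⟨hb.occ hq, ?_⟩)
    (cw_concat_prefix_short α hq k))
  apply hC.occ_cw hq
  rw [length_sw α hq k]
  exact ⟨i + 1, by have := hb.1; omega⟩

lemma IsPartition.exists_block_short {α : ℝ} (hq : ∀ k, 1 ≤ pq α k) {v : ℤ → Bool} {c : ℤ → ℤ}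
    {k : ℕ} (h : IsPartition α v (k + 1) c) {t : ℤ} (ht : Occ v t (cw α k ++ [!decide (Even k)])) :
    ∃ i, c i = t ∧ BlockIs α v c i (k + 1) := by
  have hC := h.cutSet hq
  obtain ⟨i, rfl⟩ := hC.mem_of_occ_cw hq (ht.of_prefix (List.prefix_append _ _))
  refine ⟨i, rfl, (h.2.2.2.2.2 i).resolve_right fun hb => ?_⟩
  refine Occ.false_of_concat (Occ.of_prefix ((occ_append _ _ _ _).2 ⟨hb.occ hq, ?_⟩)
    (cw_concat_prefix_long α hq k)) ht
  apply hC.occ_cw hq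
  rw [length_sw α hq (k + 1)]
  exact ⟨i + 1, by have := hb.1; omega⟩

lemma BlockIs.last_letter {α : ℝ} (hq : ∀ k, 1 ≤ pq α k) {v : ℤ → Bool} {c : ℤ → ℤ} {i : ℤ}
    {k : ℕ} (h : BlockIs α v c (i - 1) (k + 1)) : v (c i) = decide (Even (k + 1)) := by
  have ho := h.occ hq
  have hl := length_sw α hq k
  have h1 := h.1
  obtain ⟨w, hw⟩ := exists_sw_eq_append α (k + 1)
  rw [hw] at ho hl
  rw [occ_append, occ_singleton] at ho
  rw [← ho.2]
  congr 1
  simp only [sub_add_cancel, List.length_append, List.length_cons, List.length_nil] at h1 hl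
  omega

lemma eq_v0_of_exchange (α : ℝ) (h0 : 0 < α) (h1 : α < 1)
    (v : ℤ → Bool) (hv : v ∈ hull α) (m : ℤ) (hne : v (m - 1) ≠ v m)
    (hswap : (fun z : ℤ => if z = m - 1 then v m else if z = m then v (m - 1) else v z)
        ∈ hull α) (k : ℤ) (hk0 : k ≠ 0) (hk1 : k ≠ -1) : v (m + k) = v0 α k := by
  set w : ℤ → Bool := fun z => if z = m - 1 then v m else if z = m then v (m - 1) else v z
    with hw
  have hvw : ∀ z, z ≠ m - 1 → z ≠ m → w z = v z := fun z a b => by simp [hw, a, b]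
  have w1 : w (m - 1) = v m := by simp [hw]
  have w2 : w m = v (m - 1) := by simp [hw, show m ≠ m - 1 by omega]
  cases hb : v m
  · have ha : v (m - 1) = true := by simpa [hb] using hne
    exact eq_v0_of_mem_hull_of_exchange α h0 h1 v w m hv hswap hvw ha hb (w1.trans hb)
      (w2.trans ha) k hk0 hk1
  · have ha : v (m - 1) = false := by simpa [hb] using hne
    rw [← hvw (m + k) (by omega) (by omega)]
    exact eq_v0_of_mem_hull_of_exchange α h0 h1 w v m hswap hv
      (fun z a b => (hvw z a b).symm) (w1.trans hb) (w2.trans ha) ha hb k hk0 hk1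

lemma formA_or_formB (α : ℝ) (hirr : Irrational α) (h0 : 0 < α) (h1 : α < 1)
    (v : ℤ → Bool) (m : ℤ) (hne : v (m - 1) ≠ v m)
    (heq : ∀ k : ℤ, k ≠ 0 → k ≠ -1 → v (m + k) = v0 α k) (k : ℕ) (c : ℤ → ℤ)
    (hc : IsPartition α v (k + 1) c) :
    FormA α v m (k + 1) c ∨ FormB α v m (k + 1) c := by
  have hq := one_le_pq α hirr h0 h1
  have hs := length_sw α hq k
  have hs' := length_sw α hq (k + 1)
  have hlen := length_cw α hq k
  have hinj := hc.1.injective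
  have hright : Occ v m (cw α k ++ [decide (Even k)]) := by
    refine (occ_v0_long α hirr h0 h1 k).congr fun i hi _ => ?_
    rw [zero_add]
    exact heq i (by omega) (by omega)
  have hright' : Occ v m (cw α k) := hright.of_prefix (List.prefix_append _ _)
  have hleft : Occ v (m - (qd α (k + 1) + qd α (k + 2))) (cw α k) := by
    refine (occ_v0 α hirr h0 h1 k).2.congr fun i hi hi' => ?_
    rw [zero_add, ← v0_sub_qd_add_qd α hirr h0 h1 (k + 1) i hi
      (by rw [show k + 1 + 1 = k + 2 by rfl]; omega), ← heq _ _ _]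
    · congr 1
      ring
    · rw [show k + 1 + 1 = k + 2 by rfl]; omega
    · rw [show k + 1 + 1 = k + 2 by rfl]; omega
  have hpair : ∀ x y : Bool, v (m - 1) = x → v m = y →
      Occ v (m - (qd α (k + 1) + qd α (k + 2))) (cw α k ++ [x, y]) := by
    intro x y hx hy
    rw [show cw α k ++ [x, y] = (cw α k ++ [x]) ++ [y] by simp, occ_append, occ_append,
      occ_singleton, occ_singleton]
    refine ⟨⟨hleft, ?_⟩, ?_⟩
    · rw [← hx]
      congr 1
      omega
    · rw [← hy]
      congr 1
      simp only [List.length_append, List.length_cons, List.length_nil]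
      omega
  obtain ⟨i, hi, hbi⟩ := hc.exists_block_long hq hright
  by_cases hy : v m = decide (Even k)
  · left
    have hx : v (m - 1) = !decide (Even k) := by
      rw [← hy]
      exact Bool.eq_not_of_ne hne
    have h2 := hpair _ _ hx hy
    obtain ⟨i₂, hi₂, hb₂⟩ := hc.exists_block_short hq
      (h2.of_prefix ⟨[decide (Even k)], by simp⟩)
    rw [← (sw_append_sw α k).2, occ_append] at h2
    have h3 : Occ v (m - qd α (k + 2)) (sw α (k + 2) ++ cw α k) := by
      rw [occ_append]
      constructor
      · convert h2.2 using 1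
        rw [hs]
        ring
      · rw [hs', sub_add_cancel]
        exact hright'
    obtain ⟨i₁, hi₁, hb₁⟩ := hc.exists_block_long hq
      (h3.of_prefix (cw_concat_prefix_long α hq k))
    have e1 : i₁ + 1 = i := hinj (by
      have h4 : c (i₁ + 1) - c i₁ = qd α (k + 2) := hb₁.1
      omega)
    have e2 : i₂ + 1 = i₁ := hinj (by have := hb₂.1; rw [hi₂] at this; rw [hi₁]; omega)
    refine ⟨i, hi, hbi, ?_, ?_⟩
    · rwa [show i - 1 = i₁ by omega]
    · rwa [show i - 2 = i₂ by omega]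
  · right
    have hy' : v m = !decide (Even k) := Bool.eq_not_of_ne hy
    have hx : v (m - 1) = decide (Even k) := by
      rw [Bool.eq_not_of_ne hne, hy', Bool.not_not]
    have h2 := hpair _ _ hx hy'
    obtain ⟨i₂, hi₂, hb₂⟩ := hc.exists_block_long hq
      (h2.of_prefix ⟨[!decide (Even k)], by simp⟩)
    rw [← (sw_append_sw α k).1, occ_append] at h2
    have h3 : Occ v (m - qd α (k + 1)) (sw α (k + 1) ++ cw α k) := by
      rw [occ_append]
      constructor
      · convert h2.2 using 1
        rw [hs']
        ring
      · rw [hs, sub_add_cancel]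
        exact hright'
    obtain ⟨i₁, hi₁, hb₁⟩ := hc.exists_block_short hq
      (h3.of_prefix (cw_concat_prefix_short α hq k))
    have e1 : i₁ + 1 = i := hinj (by have := hb₁.1; rw [hi₁] at this; rw [hi]; omega)
    have e2 : i₂ + 1 = i₁ := hinj (by
      have := hb₂.1; rw [hi₂, show k + 1 + 1 = k + 2 by rfl] at this; rw [hi₁]; omega)
    refine ⟨i, hi, hbi, ?_, ?_⟩
    · rwa [show i - 1 = i₁ by omega]
    · rwa [show i - 2 = i₂ by omega]

lemma FormA.letter {α : ℝ} (hq : ∀ k, 1 ≤ pq α k) {v : ℤ → Bool} {m : ℤ} {n : ℕ} {c : ℤ → ℤ}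
    (h : FormA α v m n c) : v m = decide (Even (n + 1)) := by
  obtain ⟨i, rfl, -, hb, -⟩ := h
  exact hb.last_letter hq

lemma FormB.letter {α : ℝ} (hq : ∀ k, 1 ≤ pq α k) {v : ℤ → Bool} {m : ℤ} {k : ℕ} {c : ℤ → ℤ}
    (h : FormB α v m (k + 1) c) : v m = decide (Even (k + 1)) := by
  obtain ⟨i, rfl, -, hb, -⟩ := h
  exact hb.last_letter hq

/-- Lemma 5.2. Suppose `v ∈ Ω`, `v(m-1) ≠ v(m)`, and the sequence
obtained from `v` by exchanging the values at sites `m-1` and `m` again belongs to `Ω`.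
Then for every `n ≥ 1` the `(n-1, n)`-partition of `v` has form (a) or form (b) around
`m`; moreover form (a) at level `n` forces form (b) at level `n+1`, and form (b) at
level `n` forces form (a) at level `n+1`. -/
theorem exchange_partition_form (α : ℝ) (hirr : Irrational α) (h0 : 0 < α) (h1 : α < 1)
    (v : ℤ → Bool) (hv : v ∈ hull α) (m : ℤ) (hne : v (m - 1) ≠ v m)
    (hswap : (fun z : ℤ => if z = m - 1 then v m else if z = m then v (m - 1) else v z)
        ∈ hull α) :
    ∀ n : ℕ, 1 ≤ n → ∀ c : ℤ → ℤ, IsPartition α v n c →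
      (FormA α v m n c ∨ FormB α v m n c) ∧
      (∀ c' : ℤ → ℤ, IsPartition α v (n + 1) c' →
        (FormA α v m n c → FormB α v m (n + 1) c') ∧
        (FormB α v m n c → FormA α v m (n + 1) c')) := by
  have hq := one_le_pq α hirr h0 h1
  have heq := eq_v0_of_exchange α h0 h1 v hv m hne hswap
  intro n hn c hc
  obtain ⟨k, rfl⟩ := Nat.exists_eq_add_of_le' hn
  refine ⟨formA_or_formB α hirr h0 h1 v m hne heq k c hc, fun c' hc' => ?_⟩
  have hform := formA_or_formB α hirr h0 h1 v m hne heq (k + 1) c' hc'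
  refine ⟨fun h => hform.resolve_left fun h' => ?_, fun h => hform.resolve_right fun h' => ?_⟩
  · have := (h.letter hq).symm.trans (h'.letter hq)
    rw [decide_eq_decide, Nat.even_add_one (n := k + 1 + 1)] at this
    tauto
  · have := (h.letter hq).symm.trans (h'.letter hq)
    rw [decide_eq_decide, Nat.even_add_one (n := k + 1)] at this
    tauto

end
end

section
/- The following mirror symmetries hold: (i) v_{1/2}(−1−n) = v_{1/2}(n) for all n ∈ ℤ, and v_{1/2}(−1) = v_{1/2}(0) = 1; (ii) v_{α/2}(−1−n) = v_{α/2}(−1+n) for all n ∈ ℤ, and v_{α/2}(−1) = 1; (iii) with θ_B = 1/2 − 3α/2, v_{θ_B}(1−n) = v_{θ_B}(1+n) for all n ∈ ℤ, and v_{θ_B}(1) = 0. -/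
open scoped Classical

/-- The circle map sequence with phase `θ`: `v_θ(n) = 1` iff the fractional part of
`nα + θ` lies in `[1-α, 1)`. -/
noncomputable def vth (α θ : ℝ) (n : ℤ) : Bool :=
  decide (1 - α ≤ Int.fract ((n : ℝ) * α + θ))

/-- The reflection `x ↦ k - α - x` of the circle preserves the arc `[1-α, 1)`, away from its
endpoints. -/
theorem one_sub_le_fract_of_add_eq {α x y : ℝ} {k : ℤ} (h1 : α ≤ 1)
    (hxy : x + y = k - α) (hy : ∀ m : ℤ, y ≠ m) (hx : 1 - α ≤ Int.fract x) :
    1 - α ≤ Int.fract y := by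
  have hf := Int.self_sub_floor x
  have hlt := Int.fract_lt_one x
  have hne : Int.fract x ≠ 1 - α := fun h => hy (k - ⌊x⌋ - 1) (by push_cast; linarith)
  have hgt := lt_of_le_of_ne hx hne.symm
  have hfy : Int.fract y = 2 - α - Int.fract x :=
    Int.fract_eq_iff.2 ⟨by linarith, by linarith, k - ⌊x⌋ - 2, by push_cast; linarith⟩
  linarith

theorem Irrational.int_mul_add_ne_int {α θ : ℝ} {p q : ℤ} (hα : Irrational α)
    (hθ : 2 * θ = p * α + q) (hpq : Odd p ∨ Odd q) (j m : ℤ) : (j : ℝ) * α + θ ≠ m := by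
  intro h
  have he : ((2 * j + p : ℤ) : ℝ) * α = ((2 * m - q : ℤ) : ℝ) := by push_cast; linarith
  rcases eq_or_ne (2 * j + p) 0 with h0 | h0
  · rw [h0, Int.cast_zero, zero_mul] at he
    have hq : 2 * m - q = 0 := by exact_mod_cast he.symm
    rcases hpq with ⟨r, hr⟩ | ⟨r, hr⟩ <;> omega
  · exact (hα.intCast_mul h0).ne_int _ he

/-- If `2θ = pα + q` with `p` or `q` odd, then `v_θ` is symmetric under `j ↦ -1 - p - j`. -/
theorem vth_eq_of_add_eq {α θ : ℝ} {p q j k : ℤ} (hα : Irrational α) (h1 : α ≤ 1)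
    (hθ : 2 * θ = p * α + q) (hpq : Odd p ∨ Odd q) (hjk : j + k = -1 - p) :
    vth α θ j = vth α θ k := by
  have hjk' : (j : ℝ) + k = -1 - p := by exact_mod_cast hjk
  have hsum : ((j : ℝ) * α + θ) + (k * α + θ) = q - α := by
    linear_combination α * hjk' + hθ
  have hne := hα.int_mul_add_ne_int hθ hpq
  exact decide_eq_decide.2
    ⟨one_sub_le_fract_of_add_eq h1 hsum (hne k),
      one_sub_le_fract_of_add_eq h1 (by rw [add_comm, hsum]) (hne j)⟩

theorem vth_eq_decide_of_eq_add {α θ r : ℝ} {n : ℤ} (m : ℤ) (h0 : 0 ≤ r) (h1 : r < 1)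
    (h : n * α + θ = m + r) : vth α θ n = decide (1 - α ≤ r) := by
  rw [vth, Int.fract_eq_iff.2 ⟨h0, h1, m, by linarith⟩]

/-- Mirror symmetries of the symmetric elements of the Fibonacci hull:
(i) `v_{1/2}(-1-n) = v_{1/2}(n)` and `v_{1/2}(-1) = v_{1/2}(0) = 1`;
(ii) `v_{α/2}(-1-n) = v_{α/2}(-1+n)` and `v_{α/2}(-1) = 1`;
(iii) with `θ_B = 1/2 - 3α/2`, `v_{θ_B}(1-n) = v_{θ_B}(1+n)` and `v_{θ_B}(1) = 0`. -/
theorem mirror_symmetric_elements (α : ℝ) (hα : α = (Real.sqrt 5 - 1) / 2) :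
    ((∀ n : ℤ, vth α (1 / 2) (-1 - n) = vth α (1 / 2) n) ∧
      vth α (1 / 2) (-1) = true ∧ vth α (1 / 2) 0 = true) ∧
    ((∀ n : ℤ, vth α (α / 2) (-1 - n) = vth α (α / 2) (-1 + n)) ∧
      vth α (α / 2) (-1) = true) ∧
    ((∀ n : ℤ, vth α (1 / 2 - 3 * α / 2) (1 - n) = vth α (1 / 2 - 3 * α / 2) (1 + n)) ∧
      vth α (1 / 2 - 3 * α / 2) 1 = false) := by
  have hirr : Irrational α := by
    have h5 : Irrational (Real.sqrt 5) := by
      simpa using Nat.Prime.irrational_sqrt (p := 5) (by norm_num)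
    rw [hα]
    simpa using (h5.sub_intCast 1).div_natCast (m := 2) two_ne_zero
  have hlo : 1 / 2 < α := by
    have : (2 : ℝ) < Real.sqrt 5 := Real.lt_sqrt_of_sq_lt (by norm_num)
    linarith
  have hhi : α < 1 := by
    have : Real.sqrt 5 < 3 := (Real.sqrt_lt' (by norm_num)).2 (by norm_num)
    linarith
  refine ⟨⟨fun n => ?_, ?_, ?_⟩, ⟨fun n => ?_, ?_⟩, ⟨fun n => ?_, ?_⟩⟩
  · exact vth_eq_of_add_eq (p := 0) (q := 1) hirr hhi.le (by norm_num) (by decide) (by ring)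
  · rw [vth_eq_decide_of_eq_add (r := 3 / 2 - α) (-1) (by linarith) (by linarith)
      (by push_cast; ring), decide_eq_true_eq]
    linarith
  · rw [vth_eq_decide_of_eq_add (r := 1 / 2) 0 (by norm_num) (by norm_num)
      (by push_cast; ring), decide_eq_true_eq]
    linarith
  · exact vth_eq_of_add_eq (p := 1) (q := 0) hirr hhi.le (by push_cast; ring) (by decide) (by ring)
  · rw [vth_eq_decide_of_eq_add (r := 1 - α / 2) (-1) (by linarith) (by linarith)
      (by push_cast; ring), decide_eq_true_eq]
    linarith
  · exact vth_eq_of_add_eq (p := -3) (q := 1) hirr hhi.le (by push_cast; ring) (by decide) (by ring)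
  · rw [vth_eq_decide_of_eq_add (r := 1 / 2 - α / 2) 0 (by linarith) (by linarith)
      (by push_cast; ring), decide_eq_false_iff_not]
    linarith
end
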